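/- arXiv:1404.7379 — 2 statements merged into one kernel-verified Lean document; each statement's English description precedes it below -/
import Mathlib

section
/- Multiplicative identity for S-forms used in the Buchberger criterion: let g₁, g₂ be nonzero elements of K[x₁,…,xₙ]^d whose initial terms lie in the same component e_j, and let x^a, x^b be monomials of K[x₁,…,xₙ]. Set x := LCM(in_{w,≺}(x^a·g₁), in_{w,≺}(x^b·g₂)) and x₁₂ := LCM(in_{w,≺}(g₁), in_{w,≺}(g₂)) (both nonzero module monomials in component e_j). Then the module monomial x₁₂ divides x and S-form(x^a·g₁, x^b·g₂) = (x / x₁₂) · S-form(g₁, g₂). -/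
open MvPolynomial

/-- A (real-valued, additive) valuation on a field `K`:
`v(ab) = v(a)+v(b)` for nonzero `a,b`, `v(a+b) ≥ min(v a, v b)`, and `v a = ∞ ↔ a = 0`. -/
structure ValOn (K : Type*) [Field K] where
  v : K → WithTop ℝ
  v_mul : ∀ a b : K, a ≠ 0 → b ≠ 0 → v (a * b) = v a + v b
  v_add_min : ∀ a b : K, min (v a) (v b) ≤ v (a + b)
  v_eq_top_iff : ∀ a : K, v a = ⊤ ↔ a = 0

/-- A module monomial `x^u·e_k` of `R[x₁,…,xₙ]^d`, recorded as the pair `(u, k)`. -/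
abbrev MMon (n d : ℕ) := (Fin n →₀ ℕ) × Fin d

/-- A term `c·x^u·e_k`, recorded as `(c, (u, k))`. -/
abbrev Term (R : Type*) (n d : ℕ) := R × MMon n d

/-- The strict order on module monomials induced by the monomial order `mo`:
`x^α·e_i ≺ x^β·e_j` iff `x^α ≺ x^β`, or `x^α = x^β` and `i < j`. -/
def mmLt {n d : ℕ} (mo : MonomialOrder (Fin n)) (a b : MMon n d) : Prop :=
  mo.toSyn a.1 < mo.toSyn b.1 ∨ (a.1 = b.1 ∧ a.2 < b.2)

/-- The dot product `w·u` of a weight vector with an exponent vector. -/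
def wdot {n : ℕ} (w : Fin n → ℝ) (u : Fin n →₀ ℕ) : ℝ := ∑ i, w i * (u i : ℝ)

/-- The weight `ν(c) + w·u` of a term `c·x^u·e_k`. -/
def twt {R : Type*} {n d : ℕ} (ν : R → WithTop ℝ) (w : Fin n → ℝ) (t : Term R n d) :
    WithTop ℝ :=
  ν t.1 + (wdot w t.2.1 : ℝ)

/-- The term (pre)order: `c·x^u·e_i ≤ c'·x^{u'}·e_j` iff `ν(c) + w·u < ν(c') + w·u'`, or
they are equal and `x^u·e_i ⪰ x^{u'}·e_j` (smaller terms are "more initial"). -/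
def termLE {R : Type*} {n d : ℕ} (ν : R → WithTop ℝ) (w : Fin n → ℝ)
    (mo : MonomialOrder (Fin n)) (t t' : Term R n d) : Prop :=
  twt ν w t < twt ν w t' ∨
    (twt ν w t = twt ν w t' ∧ (mmLt mo t'.2 t.2 ∨ t.2 = t'.2))

/-- The coefficient of `f ∈ R[x₁,…,xₙ]^d` at the module monomial `m = (u, k)`. -/
def coeffM {R : Type*} [CommSemiring R] {n d : ℕ} (f : Fin d → MvPolynomial (Fin n) R)
    (m : MMon n d) : R :=
  coeff m.1 (f m.2)

/-- `t` is the initial term `in_{w,≺}(f)` of `f`: it is a term of `f` which is least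
in the term order among all terms of `f`. -/
def IsInit {R : Type*} [CommSemiring R] {n d : ℕ} (ν : R → WithTop ℝ) (w : Fin n → ℝ)
    (mo : MonomialOrder (Fin n)) (f : Fin d → MvPolynomial (Fin n) R) (t : Term R n d) : Prop :=
  t.1 ≠ 0 ∧ coeffM f t.2 = t.1 ∧
    ∀ m : MMon n d, coeffM f m ≠ 0 → termLE ν w mo t (coeffM f m, m)

/-- The term `c·x^u·e_k` as an element of `R[x₁,…,xₙ]^d`. -/
noncomputable def termEl {R : Type*} [CommSemiring R] {n d : ℕ} (t : Term R n d) :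
    Fin d → MvPolynomial (Fin n) R :=
  Pi.single t.2.2 (monomial t.2.1 t.1)

/-- The initial submodule `in_{w,≺}(I)`: the submodule generated by the initial terms of
the nonzero elements of `I`. -/
noncomputable def inSub {R : Type*} [CommRing R] {n d : ℕ} (ν : R → WithTop ℝ)
    (w : Fin n → ℝ) (mo : MonomialOrder (Fin n))
    (I : Submodule (MvPolynomial (Fin n) R) (Fin d → MvPolynomial (Fin n) R)) :
    Submodule (MvPolynomial (Fin n) R) (Fin d → MvPolynomial (Fin n) R) :=
  Submodule.span _ {g | ∃ f ∈ I, f ≠ 0 ∧ ∃ t : Term R n d, IsInit ν w mo f t ∧ g = termEl t}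

/-- `f ∈ R[x₁,…,xₙ]^d` is homogeneous (of some degree `δ`). -/
def IsHomog {R : Type*} [CommSemiring R] {n d : ℕ} (f : Fin d → MvPolynomial (Fin n) R) : Prop :=
  ∃ δ : ℕ, ∀ m : MMon n d, coeffM f m ≠ 0 → (∑ i, m.1 i) = δ

/-- The S-form of `f, g` whose initial terms `tf = c·x^α·e_j`, `tg = c'·x^β·e_j` lie in the
same component: `S-form(f,g) = (x^{α⊔β−α}/c)·f − (x^{α⊔β−β}/c')·g`. -/
noncomputable def sForm {K : Type*} [Field K] {n d : ℕ}
    (f g : Fin d → MvPolynomial (Fin n) K) (tf tg : Term K n d) :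
    Fin d → MvPolynomial (Fin n) K :=
  (monomial (tf.2.1 ⊔ tg.2.1 - tf.2.1) tf.1⁻¹ : MvPolynomial (Fin n) K) • f -
    (monomial (tf.2.1 ⊔ tg.2.1 - tg.2.1) tg.1⁻¹ : MvPolynomial (Fin n) K) • g

/-!
Multiplying by `x^a` adds the constant `w·a` to the weights of all terms and is compatible with `≺`,
so the initial term of `x^a·g` is `x^a` times the initial term of `g`. With `in(g₁) = c·x^u·e_j` and
`x = x^m·e_j`, the coefficient of `g₁` in `S-form(x^a·g₁, x^b·g₂)` is then
`c⁻¹·x^{m-(a+u)}·x^a = c⁻¹·x^{m-u}`, which is `x/x₁₂` times its coefficient in `S-form(g₁, g₂)`;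
the same holds for `g₂`.
-/

/-- The term `x^a·t`, the product of the monomial `x^a` with the term `t`. -/
noncomputable def Term.monomialMul {R : Type*} {n d : ℕ} (a : Fin n →₀ ℕ) (t : Term R n d) :
    Term R n d :=
  (t.1, a + t.2.1, t.2.2)

/-- The position of a term in the term order, as an element of a linear order: first the weight,
then the module monomial, in the dual order because larger module monomials are more initial. -/
noncomputable def termKey {R : Type*} {n d : ℕ} (ν : R → WithTop ℝ) (w : Fin n → ℝ)
    (mo : MonomialOrder (Fin n)) (t : Term R n d) : WithTop ℝ ×ₗ (mo.syn ×ₗ Fin d)ᵒᵈ :=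
  toLex (twt ν w t, OrderDual.toDual (toLex (mo.toSyn t.2.1, t.2.2)))

section TermOrder

variable {R : Type*} {n d : ℕ} {ν : R → WithTop ℝ} {w : Fin n → ℝ} {mo : MonomialOrder (Fin n)}

lemma mmLt_iff_toLex_lt {m m' : MMon n d} :
    mmLt mo m m' ↔ toLex (mo.toSyn m.1, m.2) < toLex (mo.toSyn m'.1, m'.2) := by
  simp only [mmLt, Prod.Lex.toLex_lt_toLex, EmbeddingLike.apply_eq_iff_eq]

lemma toLex_toSyn_inj {m m' : MMon n d} :
    toLex (mo.toSyn m.1, m.2) = toLex (mo.toSyn m'.1, m'.2) ↔ m = m' := by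
  simp only [EmbeddingLike.apply_eq_iff_eq, Prod.ext_iff]

lemma termLE_iff_termKey_le {t t' : Term R n d} :
    termLE ν w mo t t' ↔ termKey ν w mo t ≤ termKey ν w mo t' := by
  simp only [termLE, termKey, Prod.Lex.toLex_le_toLex, OrderDual.toDual_le_toDual,
    le_iff_lt_or_eq (a := toLex (mo.toSyn t'.2.1, t'.2.2)), mmLt_iff_toLex_lt, toLex_toSyn_inj,
    eq_comm (a := t.2)]

lemma termLE_antisymm {t t' : Term R n d} (h : termLE ν w mo t t') (h' : termLE ν w mo t' t) :
    t.2 = t'.2 := by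
  have key_eq : termKey ν w mo t = termKey ν w mo t' :=
    le_antisymm (termLE_iff_termKey_le.1 h) (termLE_iff_termKey_le.1 h')
  exact toLex_toSyn_inj.1 (OrderDual.toDual.injective (congrArg (fun p ↦ (ofLex p).2) key_eq))

lemma wdot_add (w : Fin n → ℝ) (u v : Fin n →₀ ℕ) : wdot w (u + v) = wdot w u + wdot w v := by
  simp only [wdot, Finsupp.add_apply, Nat.cast_add, mul_add, Finset.sum_add_distrib]

lemma twt_monomialMul (a : Fin n →₀ ℕ) (t : Term R n d) :
    twt ν w (t.monomialMul a) = wdot w a + twt ν w t := by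
  simp only [twt, Term.monomialMul, wdot_add, WithTop.coe_add]
  exact add_left_comm _ _ _

lemma mmLt_add_left_iff (a : Fin n →₀ ℕ) {m m' : MMon n d} :
    mmLt mo (a + m.1, m.2) (a + m'.1, m'.2) ↔ mmLt mo m m' := by
  simp only [mmLt, map_add, add_lt_add_iff_left, add_right_inj]

lemma termLE_monomialMul_iff (a : Fin n →₀ ℕ) {t t' : Term R n d} :
    termLE ν w mo (t.monomialMul a) (t'.monomialMul a) ↔ termLE ν w mo t t' := by
  simp only [termLE, twt_monomialMul, WithTop.add_lt_add_iff_left WithTop.coe_ne_top,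
    WithTop.add_left_inj WithTop.coe_ne_top]
  simp only [Term.monomialMul, mmLt_add_left_iff, Prod.ext_iff, add_right_inj]

end TermOrder

section InitialTerm

variable {R : Type*} [CommSemiring R] {n d : ℕ} {ν : R → WithTop ℝ} {w : Fin n → ℝ}
  {mo : MonomialOrder (Fin n)} {f : Fin d → MvPolynomial (Fin n) R}

lemma coeffM_monomial_smul_add (a u : Fin n →₀ ℕ) (c : R) (f : Fin d → MvPolynomial (Fin n) R)
    (k : Fin d) : coeffM (monomial a c • f) (a + u, k) = c * coeffM f (u, k) :=
  coeff_monomial_mul u a c (f k)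

lemma le_of_coeffM_monomial_smul_ne_zero {a : Fin n →₀ ℕ} {c : R} {m : MMon n d}
    (h : coeffM (monomial a c • f) m ≠ 0) : a ≤ m.1 := by
  by_contra not_le
  exact h ((coeff_monomial_mul' m.1 a c (f m.2)).trans (if_neg not_le))

lemma IsInit.unique {t t' : Term R n d} (h : IsInit ν w mo f t) (h' : IsInit ν w mo f t') :
    t = t' := by
  obtain ⟨ne_zero, coeff_eq, le⟩ := h
  obtain ⟨ne_zero', coeff_eq', le'⟩ := h'
  have le_t' : termLE ν w mo t t' := by
    simpa only [coeff_eq'] using le t'.2 (coeff_eq' ▸ ne_zero')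
  have le_t : termLE ν w mo t' t := by
    simpa only [coeff_eq] using le' t.2 (coeff_eq ▸ ne_zero)
  have monomial_eq : t.2 = t'.2 := termLE_antisymm le_t' le_t
  exact Prod.ext (by rw [← coeff_eq, monomial_eq, coeff_eq']) monomial_eq

lemma IsInit.monomial_smul {t : Term R n d} (h : IsInit ν w mo f t) (a : Fin n →₀ ℕ) :
    IsInit ν w mo ((monomial a (1 : R) : MvPolynomial (Fin n) R) • f) (t.monomialMul a) := by
  obtain ⟨ne_zero, coeff_eq, le⟩ := h
  refine ⟨ne_zero, ?_, ?_⟩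
  · rw [Term.monomialMul, coeffM_monomial_smul_add, one_mul, coeff_eq]
  · rintro ⟨v, k⟩ hv
    obtain ⟨u, rfl⟩ := exists_add_of_le (le_of_coeffM_monomial_smul_ne_zero hv)
    rw [coeffM_monomial_smul_add, one_mul] at hv ⊢
    exact (termLE_monomialMul_iff a).2 (le (u, k) hv)

end InitialTerm

-- Both sides are `c·x^{m - u}`.
lemma monomial_tsub_mul_monomial {σ R : Type*} [CommSemiring R] {a u l m : σ →₀ ℕ} (c : R)
    (hul : u ≤ l) (hlm : l ≤ m) (ham : a + u ≤ m) :
    monomial (m - (a + u)) c * monomial a 1 = monomial (m - l) 1 * monomial (l - u) c := by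
  have exponent_eq : m - (a + u) + a = m - l + (l - u) := by
    rw [tsub_add_tsub_cancel hlm hul, ← tsub_add_tsub_cancel ham le_add_self,
      add_tsub_cancel_right]
  rw [monomial_mul, monomial_mul, exponent_eq, mul_comm]

lemma sForm_monomialMul {K : Type*} [Field K] {n d : ℕ} (f g : Fin d → MvPolynomial (Fin n) K)
    (tf tg : Term K n d) (a b : Fin n →₀ ℕ) :
    sForm ((monomial a (1 : K) : MvPolynomial (Fin n) K) • f)
        ((monomial b (1 : K) : MvPolynomial (Fin n) K) • g)
        (tf.monomialMul a) (tg.monomialMul b) =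
      (monomial ((a + tf.2.1) ⊔ (b + tg.2.1) - tf.2.1 ⊔ tg.2.1) (1 : K) :
        MvPolynomial (Fin n) K) • sForm f g tf tg := by
  have lcm_le : tf.2.1 ⊔ tg.2.1 ≤ (a + tf.2.1) ⊔ (b + tg.2.1) :=
    sup_le_sup le_add_self le_add_self
  simp only [sForm, Term.monomialMul, smul_sub, smul_smul,
    monomial_tsub_mul_monomial _ le_sup_left lcm_le le_sup_left,
    monomial_tsub_mul_monomial _ le_sup_right lcm_le le_sup_right]

theorem sForm_monomial_mul_general {K : Type*} [Field K] {n d : ℕ}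
    (ν : K → WithTop ℝ) (w : Fin n → ℝ) (mo : MonomialOrder (Fin n))
    (g₁ g₂ : Fin d → MvPolynomial (Fin n) K) (t₁ t₂ : Term K n d)
    (h₁ : IsInit ν w mo g₁ t₁) (h₂ : IsInit ν w mo g₂ t₂)
    (a b : Fin n →₀ ℕ) (t₁' t₂' : Term K n d)
    (h₁' : IsInit ν w mo ((monomial a (1 : K) : MvPolynomial (Fin n) K) • g₁) t₁')
    (h₂' : IsInit ν w mo ((monomial b (1 : K) : MvPolynomial (Fin n) K) • g₂) t₂') :
    t₁'.2.2 = t₁.2.2 ∧ t₂'.2.2 = t₂.2.2 ∧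
    t₁.2.1 ⊔ t₂.2.1 ≤ t₁'.2.1 ⊔ t₂'.2.1 ∧
    sForm ((monomial a (1 : K) : MvPolynomial (Fin n) K) • g₁)
        ((monomial b (1 : K) : MvPolynomial (Fin n) K) • g₂) t₁' t₂' =
      (monomial (t₁'.2.1 ⊔ t₂'.2.1 - t₁.2.1 ⊔ t₂.2.1) (1 : K) : MvPolynomial (Fin n) K) •
        sForm g₁ g₂ t₁ t₂ := by
  obtain rfl : t₁' = t₁.monomialMul a := h₁'.unique (h₁.monomial_smul a)
  obtain rfl : t₂' = t₂.monomialMul b := h₂'.unique (h₂.monomial_smul b)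
  exact ⟨rfl, rfl, sup_le_sup le_add_self le_add_self, sForm_monomialMul g₁ g₂ t₁ t₂ a b⟩

/-- **Multiplicative identity for S-forms**: if `g₁, g₂` are nonzero with initial terms
`t₁, t₂` in the same component, `x^a, x^b` are monomials, and `t₁', t₂'` are the initial
terms of `x^a·g₁, x^b·g₂`, then `x₁₂ := LCM(in(g₁), in(g₂))` divides
`x := LCM(in(x^a·g₁), in(x^b·g₂))` and
`S-form(x^a·g₁, x^b·g₂) = (x/x₁₂)·S-form(g₁, g₂)`. -/
theorem sForm_monomial_mul {K : Type*} [Field K] {n d : ℕ}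
    (V : ValOn K) (w : Fin n → ℝ) (mo : MonomialOrder (Fin n))
    (g₁ g₂ : Fin d → MvPolynomial (Fin n) K) (hg₁ : g₁ ≠ 0) (hg₂ : g₂ ≠ 0)
    (t₁ t₂ : Term K n d)
    (h₁ : IsInit V.v w mo g₁ t₁) (h₂ : IsInit V.v w mo g₂ t₂)
    (hcomp : t₁.2.2 = t₂.2.2)
    (a b : Fin n →₀ ℕ) (t₁' t₂' : Term K n d)
    (h₁' : IsInit V.v w mo ((monomial a (1 : K) : MvPolynomial (Fin n) K) • g₁) t₁')
    (h₂' : IsInit V.v w mo ((monomial b (1 : K) : MvPolynomial (Fin n) K) • g₂) t₂') :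
    t₁'.2.2 = t₁.2.2 ∧ t₂'.2.2 = t₂.2.2 ∧
    t₁.2.1 ⊔ t₂.2.1 ≤ t₁'.2.1 ⊔ t₂'.2.1 ∧
    sForm ((monomial a (1 : K) : MvPolynomial (Fin n) K) • g₁)
        ((monomial b (1 : K) : MvPolynomial (Fin n) K) • g₂) t₁' t₂' =
      (monomial (t₁'.2.1 ⊔ t₂'.2.1 - t₁.2.1 ⊔ t₂.2.1) (1 : K) : MvPolynomial (Fin n) K) •
        sForm g₁ g₂ t₁ t₂ :=
  sForm_monomial_mul_general V.v w mo g₁ g₂ t₁ t₂ h₁ h₂ a b t₁' t₂' h₁' h₂'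
end

section
/- Idempotence of the initial submodule operation: for every submodule I of K[x₁,…,xₙ]^d over a field K with valuation, one has in_{w,≺}(in_{w,≺}(I)) = in_{w,≺}(I). -/
open MvPolynomial

/-! A submodule generated by terms contains every term of each of its elements, in particular
the initial ones; conversely, a nonzero term is its own initial term. So the operation
`in_{w,≺}` fixes every submodule generated by terms, and `in_{w,≺}(I)` is one of these. -/

section TermPart

variable {R : Type*} [CommSemiring R] {n d : ℕ}

theorem coeffM_termEl_self (t : Term R n d) : coeffM (termEl t) t.2 = t.1 := by
  simp [coeffM, termEl]

theorem coeffM_termEl_of_ne {t : Term R n d} {m : MMon n d} (h : m ≠ t.2) :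
    coeffM (termEl t) m = 0 := by
  by_cases hk : m.2 = t.2.2
  · have hu : t.2.1 ≠ m.1 := fun hu => h (Prod.ext hu.symm hk)
    simp [coeffM, termEl, hk, hu]
  · simp [coeffM, termEl, Pi.single_eq_of_ne hk]

theorem termEl_eq_zero_iff {t : Term R n d} : termEl t = 0 ↔ t.1 = 0 := by
  simp [termEl]

/-- The projection of `R[x₁,…,xₙ]^d` onto the terms in the module monomial `m`, sending `f` to
its term `c·m` (or to `0` if `m` does not occur in `f`). -/
noncomputable def termPart (m : MMon n d) :
    (Fin d → MvPolynomial (Fin n) R) →ₗ[R] (Fin d → MvPolynomial (Fin n) R) :=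
  LinearMap.single R _ m.2 ∘ₗ monomial m.1 ∘ₗ lcoeff R m.1 ∘ₗ LinearMap.proj m.2

theorem termPart_apply (m : MMon n d) (f : Fin d → MvPolynomial (Fin n) R) :
    termPart m f = termEl (coeffM f m, m) :=
  rfl

theorem termPart_termEl_self (t : Term R n d) : termPart t.2 (termEl t) = termEl t := by
  rw [termPart_apply, coeffM_termEl_self]

theorem termPart_termEl_of_ne {t : Term R n d} {m : MMon n d} (h : m ≠ t.2) :
    termPart m (termEl t) = 0 := by
  rw [termPart_apply, coeffM_termEl_of_ne h, termEl_eq_zero_iff]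

theorem termPart_smul (p : MvPolynomial (Fin n) R) (f : Fin d → MvPolynomial (Fin n) R)
    (u : Fin n →₀ ℕ) (k : Fin d) :
    termPart (u, k) (p • f) =
      ∑ q ∈ Finset.HasAntidiagonal.antidiagonal u,
        monomial q.1 (coeff q.1 p) • termPart (q.2, k) f := by
  have monomial_smul_termPart : ∀ q ∈ Finset.HasAntidiagonal.antidiagonal u,
      monomial q.1 (coeff q.1 p) • termPart (q.2, k) f =
        Pi.single k (monomial u (coeff q.1 p * coeff q.2 (f k))) := by
    intro q hq
    rw [termPart_apply, termEl, ← Pi.single_smul, smul_eq_mul, monomial_mul,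
      Finset.HasAntidiagonal.mem_antidiagonal.1 hq, coeffM]
  rw [Finset.sum_congr rfl monomial_smul_termPart, termPart_apply, termEl, coeffM,
    Pi.smul_apply, smul_eq_mul, coeff_mul, map_sum]
  exact map_sum (LinearMap.single R _ k) _ _

theorem termPart_mem_span_termEl {T : Set (Term R n d)} {f : Fin d → MvPolynomial (Fin n) R}
    (hf : f ∈ Submodule.span (MvPolynomial (Fin n) R) (termEl '' T)) (m : MMon n d) :
    termPart m f ∈ Submodule.span (MvPolynomial (Fin n) R) (termEl '' T) := by
  induction hf using Submodule.span_induction generalizing m with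
  | mem g hg =>
    obtain ⟨t, ht, rfl⟩ := hg
    by_cases hm : m = t.2
    · rw [hm, termPart_termEl_self]
      exact Submodule.subset_span ⟨t, ht, rfl⟩
    · rw [termPart_termEl_of_ne hm]
      exact Submodule.zero_mem _
  | zero => rw [map_zero]; exact Submodule.zero_mem _
  | add f g _ _ hf hg => rw [map_add]; exact Submodule.add_mem _ (hf m) (hg m)
  | smul p f _ hf =>
    rw [termPart_smul]
    exact Submodule.sum_mem _ fun q _ => Submodule.smul_mem _ _ (hf _)

end TermPart

section InitialTerms

variable {R : Type*} {n d : ℕ} {ν : R → WithTop ℝ} {w : Fin n → ℝ} {mo : MonomialOrder (Fin n)}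

theorem termLE_refl (t : Term R n d) : termLE ν w mo t t :=
  Or.inr ⟨rfl, Or.inr rfl⟩

variable [CommSemiring R]

theorem IsInit.ne_zero {f : Fin d → MvPolynomial (Fin n) R} {t : Term R n d}
    (h : IsInit ν w mo f t) : f ≠ 0 := by
  rintro rfl
  exact h.1 (h.2.1.symm.trans (coeff_zero _))

theorem IsInit.termPart_eq {f : Fin d → MvPolynomial (Fin n) R} {t : Term R n d}
    (h : IsInit ν w mo f t) : termPart t.2 f = termEl t := by
  rw [termPart_apply, h.2.1]

theorem isInit_termEl {t : Term R n d} (ht : t.1 ≠ 0) : IsInit ν w mo (termEl t) t := by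
  refine ⟨ht, coeffM_termEl_self t, fun m hm => ?_⟩
  rw [not_imp_comm.1 coeffM_termEl_of_ne hm, coeffM_termEl_self]
  exact termLE_refl t

end InitialTerms

section InitialSubmodule

variable {R : Type*} [CommRing R] {n d : ℕ} (ν : R → WithTop ℝ) (w : Fin n → ℝ)
  (mo : MonomialOrder (Fin n))

theorem inSub_eq_span_termEl
    (I : Submodule (MvPolynomial (Fin n) R) (Fin d → MvPolynomial (Fin n) R)) :
    inSub ν w mo I =
      Submodule.span (MvPolynomial (Fin n) R) (termEl '' {t | ∃ f ∈ I, IsInit ν w mo f t}) := by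
  refine congrArg (Submodule.span _) (Set.ext fun g => ⟨?_, ?_⟩)
  · rintro ⟨f, hf, -, t, ht, rfl⟩
    exact ⟨t, ⟨f, hf, ht⟩, rfl⟩
  · rintro ⟨t, ⟨f, hf, ht⟩, rfl⟩
    exact ⟨f, hf, ht.ne_zero, t, ht, rfl⟩

theorem inSub_span_termEl (T : Set (Term R n d)) :
    inSub ν w mo (Submodule.span (MvPolynomial (Fin n) R) (termEl '' T)) =
      Submodule.span (MvPolynomial (Fin n) R) (termEl '' T) := by
  rw [inSub_eq_span_termEl]
  apply le_antisymm <;> rw [Submodule.span_le]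
  · rintro _ ⟨t, ⟨f, hf, ht⟩, rfl⟩
    rw [← ht.termPart_eq]
    exact termPart_mem_span_termEl hf t.2
  · rintro _ ⟨t, ht, rfl⟩
    by_cases ht0 : t.1 = 0
    · rw [termEl_eq_zero_iff.2 ht0]
      exact Submodule.zero_mem _
    · exact Submodule.subset_span
        ⟨t, ⟨termEl t, Submodule.subset_span ⟨t, ht, rfl⟩, isInit_termEl ht0⟩, rfl⟩

theorem inSub_idem_general
    (I : Submodule (MvPolynomial (Fin n) R) (Fin d → MvPolynomial (Fin n) R)) :
    inSub ν w mo (inSub ν w mo I) = inSub ν w mo I := by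
  rw [inSub_eq_span_termEl ν w mo I, inSub_span_termEl]

end InitialSubmodule

/-- **Idempotence of the initial submodule operation**: for every submodule `I` of
`K[x₁,…,xₙ]^d` over a field `K` with valuation, `in_{w,≺}(in_{w,≺}(I)) = in_{w,≺}(I)`. -/
theorem inSub_idem {K : Type*} [Field K] {n d : ℕ}
    (V : ValOn K) (w : Fin n → ℝ) (mo : MonomialOrder (Fin n))
    (I : Submodule (MvPolynomial (Fin n) K) (Fin d → MvPolynomial (Fin n) K)) :
    inSub V.v w mo (inSub V.v w mo I) = inSub V.v w mo I := by
  exact inSub_idem_general V.v w mo I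
end
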